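/- There exists a universal constant C > 0 such that the following holds. Let n ≥ 1, d ≥ 1, let P be a polynomial of degree at most d on {-1,1}^n with E P(X) = 0 (X uniform on {-1,1}^n), and for r > 0 let a_r be an e^{-r}-quantile of P(X). Then for all r ≥ C·d, a_{r+1} ≤ a_r · [1 + C^d · (r/d + 1)^{d/2 - 1}]. -/

import Mathlib

open Classical

/-- Expectation with respect to the uniform measure on the discrete cube `{-1,1}^n`,
encoded as `Fin n → Bool` (`true ↦ 1`, `false ↦ -1`). -/
noncomputable def cubeE (n : ℕ) (f : (Fin n → Bool) → ℝ) : ℝ :=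
  (∑ x : Fin n → Bool, f x) / 2 ^ n

/-- The real value of a coordinate of the cube: `true ↦ 1`, `false ↦ -1`. -/
def cubeSign (b : Bool) : ℝ := if b then 1 else -1

/-- `P` is (the restriction to the cube of) a multilinear polynomial of degree at most `d`:
`P x = ∑_{#S ≤ d} a_S ∏_{i ∈ S} x_i`. -/
def IsPolyDeg (n d : ℕ) (P : (Fin n → Bool) → ℝ) : Prop :=
  ∃ a : Finset (Fin n) → ℝ,
    (∀ S : Finset (Fin n), d < S.card → a S = 0) ∧
    ∀ x, P x = ∑ S : Finset (Fin n), a S * ∏ i ∈ S, cubeSign (x i)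

/-- Probability (uniform measure) of a set of points of the cube. -/
noncomputable def cubePr (n : ℕ) (A : Set (Fin n → Bool)) : ℝ :=
  (∑ x : Fin n → Bool, if x ∈ A then (1 : ℝ) else 0) / 2 ^ n

/-- `a` is an `e^{-r}`-quantile of `P(X)`:
`ℙ(P(X) ≥ a) ≥ e^{-r}` and `ℙ(P(X) ≤ a) ≥ 1 - e^{-r}`. -/
def IsQuantile (n : ℕ) (P : (Fin n → Bool) → ℝ) (r a : ℝ) : Prop :=
  Real.exp (-r) ≤ cubePr n {x | a ≤ P x} ∧ 1 - Real.exp (-r) ≤ cubePr n {x | P x ≤ a}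

/-- Discrete partial derivative: `∂_i f(x) = (f(T_i^1 x) - f(T_i^{-1} x))/2`. -/
noncomputable def discDeriv (n : ℕ) (f : (Fin n → Bool) → ℝ) (i : Fin n)
    (x : Fin n → Bool) : ℝ :=
  (f (Function.update x i true) - f (Function.update x i false)) / 2

/-- Squared norm of the discrete gradient: `|∇f(x)|² = ∑_i |∂_i f(x)|²`. -/
noncomputable def gradSq (n : ℕ) (f : (Fin n → Bool) → ℝ) (x : Fin n → Bool) : ℝ :=
  ∑ i : Fin n, (discDeriv n f i x) ^ 2

/-!
Let `L` be the Laplacian of the cube, `f` of degree at most `d` with mean zero, and let `t` be a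
level with `ℙ(f > t) ≤ exp (-r)`. The truncation `u = (f - t)⁺` lives on a set of that probability,
and hypercontractivity yields a Faber–Krahn inequality `r 𝔼 u² ≤ 6 𝔼 u L u` for such functions.
Pointwise `u L u ≤ u L f`, so Cauchy–Schwarz gives `r² 𝔼 u² ≤ 36 𝔼 (L f)² 𝟙{f > t}`. As `L f` again
has degree at most `d`, Hölder's inequality and the moment growth `‖g‖_{2k}² ≤ (4k)^d ‖g‖₂²` with
`k ≈ r / d` bound the right-hand side by `C^d (r / d + 1)^d exp (-r) ‖f‖₂²`. If the level `t + δ` is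
still exceeded with probability `exp (-(r + 1))`, then `𝔼 u² ≥ δ² exp (-(r + 1))`, which controls
`δ` by `C^d (r / d + 1)^(d / 2 - 1) ‖f‖₂`. Finally `‖f‖₂ ≤ C^d t`: since `f` has mean zero, its `L¹`
norm is at most `2 t⁺` up to a contribution of the rare event `f > t`, and it is comparable to
`‖f‖₂` for polynomials of bounded degree.
-/
open Finset
open scoped BigOperators

section Expectation

lemma rpow_inv_natCast_le_iff {k : ℕ} (hk : k ≠ 0) {x y : ℝ} (hx : 0 ≤ x) (hy : 0 ≤ y) :
    x ^ (k : ℝ)⁻¹ ≤ y ↔ x ≤ y ^ k := by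
  rw [Real.rpow_inv_le_iff_of_pos hx hy (by positivity), Real.rpow_natCast]

variable {Ω : Type*} [Fintype Ω]

lemma expect_add_pow_le {k : ℕ} (hk : k ≠ 0) {f g : Ω → ℝ} {a b : ℝ} (hf : ∀ x, 0 ≤ f x)
    (hg : ∀ x, 0 ≤ g x) (ha : 0 ≤ a) (hb : 0 ≤ b) (hfa : 𝔼 x, f x ^ k ≤ a ^ k)
    (hgb : 𝔼 x, g x ^ k ≤ b ^ k) : 𝔼 x, (f x + g x) ^ k ≤ (a + b) ^ k := by
  have hk1 : (1 : ℝ) ≤ k := by exact_mod_cast Nat.one_le_iff_ne_zero.2 hk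
  have hfk : 0 ≤ 𝔼 x, f x ^ k := expect_nonneg fun x _ => pow_nonneg (hf x) k
  have hgk : 0 ≤ 𝔼 x, g x ^ k := expect_nonneg fun x _ => pow_nonneg (hg x) k
  have hfgk : 0 ≤ 𝔼 x, (f x + g x) ^ k :=
    expect_nonneg fun x _ => pow_nonneg (add_nonneg (hf x) (hg x)) k
  have minkowski : (𝔼 x, (f x + g x) ^ k) ^ (k : ℝ)⁻¹ ≤
      (𝔼 x, f x ^ k) ^ (k : ℝ)⁻¹ + (𝔼 x, g x ^ k) ^ (k : ℝ)⁻¹ := by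
    have h := Real.Lp_add_le_of_nonneg univ hk1 (fun x _ => hf x) (fun x _ => hg x)
    simp only [Real.rpow_natCast, one_div, ← Fintype.card_mul_expect] at h
    rw [Real.mul_rpow (by positivity) hfgk, Real.mul_rpow (by positivity) hfk,
      Real.mul_rpow (by positivity) hgk, ← mul_add] at h
    rcases isEmpty_or_nonempty Ω with hΩ | hΩ
    · simp [hk]
    · exact le_of_mul_le_mul_left h (by positivity)
  rw [← rpow_inv_natCast_le_iff hk hfgk (add_nonneg ha hb)]
  exact minkowski.trans (add_le_add ((rpow_inv_natCast_le_iff hk hfk ha).2 hfa)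
    ((rpow_inv_natCast_le_iff hk hgk hb).2 hgb))

lemma expect_indicator_le_rpow_mul {k : ℕ} (hk : k ≠ 0) {f : Ω → ℝ} {a : ℝ} (hf : ∀ x, 0 ≤ f x)
    (ha : 0 ≤ a) (hfa : 𝔼 x, f x ^ k ≤ a ^ k) (A : Set Ω) :
    𝔼 x, A.indicator f x ≤ (𝔼 x, A.indicator 1 x) ^ (1 - (k : ℝ)⁻¹) * a := by
  have hk1 : (1 : ℝ) ≤ k := by exact_mod_cast Nat.one_le_iff_ne_zero.2 hk
  have hA (x : Ω) : 0 ≤ A.indicator (1 : Ω → ℝ) x := Set.indicator_nonneg (by simp) x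
  have hA1 (x : Ω) : A.indicator (1 : Ω → ℝ) x ≤ 1 := Set.indicator_le_self' (by simp) x
  have holder := Real.compact_inner_le_weight_mul_Lp_of_nonneg univ hk1 hA hf
  simp only [Real.rpow_natCast] at holder
  have hmoment : 𝔼 x, A.indicator (1 : Ω → ℝ) x * f x ^ k ≤ a ^ k :=
    (expect_le_expect fun x _ =>
      mul_le_of_le_one_left (pow_nonneg (hf x) k) (hA1 x)).trans hfa
  have hmoment_nonneg : 0 ≤ 𝔼 x, A.indicator (1 : Ω → ℝ) x * f x ^ k :=
    expect_nonneg fun x _ => mul_nonneg (hA x) (pow_nonneg (hf x) k)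
  calc 𝔼 x, A.indicator f x = 𝔼 x, A.indicator (1 : Ω → ℝ) x * f x := by
        simp only [← Set.indicator_mul_left, Pi.one_apply, one_mul]
    _ ≤ _ := holder
    _ ≤ _ := by
        gcongr
        · exact Real.rpow_nonneg (expect_nonneg fun x _ => hA x) _
        · exact (rpow_inv_natCast_le_iff hk hmoment_nonneg ha).2 hmoment

lemma expect_indicator_le_sqrt_mul_sqrt (A : Set Ω) (f : Ω → ℝ) :
    𝔼 x, A.indicator f x ≤ √(𝔼 x, A.indicator 1 x) * √(𝔼 x, f x ^ 2) := by
  rw [← Real.sqrt_mul (expect_nonneg fun x _ => Set.indicator_nonneg (by simp) x)]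
  apply Real.le_sqrt_of_sq_le
  have h := expect_mul_sq_le_sq_mul_sq univ (A.indicator 1) f
  simpa only [sq, ← Set.indicator_mul_left, ← Set.indicator_mul_right, Pi.one_apply, one_mul,
    mul_one, Set.indicator_indicator, Set.inter_self] using h

lemma expect_sq_le_expect_mul_expect_of_sq_le_mul {f g h : Ω → ℝ} (hg : ∀ x, 0 ≤ g x)
    (hh : ∀ x, 0 ≤ h x) (hfgh : ∀ x, f x ^ 2 ≤ g x * h x) :
    (𝔼 x, f x) ^ 2 ≤ (𝔼 x, g x) * 𝔼 x, h x := by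
  simp only [Fintype.expect_eq_sum_div_card, div_pow, div_mul_div_comm, ← sq]
  gcongr
  exact sum_sq_le_sum_mul_sum_of_sq_le_mul univ (fun x _ => hg x) (fun x _ => hh x)
    fun x _ => hfgh x

lemma expect_sq_pow_three_le (f : Ω → ℝ) :
    (𝔼 x, f x ^ 2) ^ 3 ≤ (𝔼 x, |f x|) ^ 2 * 𝔼 x, f x ^ 4 := by
  have hsq : 0 ≤ 𝔼 x, f x ^ 2 := expect_nonneg fun x _ => sq_nonneg _
  have h12 : (𝔼 x, f x ^ 2) ^ 2 ≤ (𝔼 x, |f x|) * 𝔼 x, |f x| ^ 3 :=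
    expect_sq_le_expect_mul_expect_of_sq_le_mul (fun x => abs_nonneg _) (fun x => by positivity)
      fun x => le_of_eq (by rw [← sq_abs (f x)]; ring)
  have h24 : (𝔼 x, |f x| ^ 3) ^ 2 ≤ (𝔼 x, f x ^ 2) * 𝔼 x, f x ^ 4 :=
    expect_sq_le_expect_mul_expect_of_sq_le_mul (fun x => by positivity) (fun x => by positivity)
      fun x => le_of_eq (by rw [← sq_abs (f x), ← Even.pow_abs (by decide : Even 4) (f x)]; ring)
  rcases hsq.eq_or_lt with h0 | hpos
  · rw [← h0, zero_pow three_ne_zero]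
    exact mul_nonneg (sq_nonneg _) (expect_nonneg fun x _ => by positivity)
  refine le_of_mul_le_mul_right ?_ hpos
  calc (𝔼 x, f x ^ 2) ^ 3 * 𝔼 x, f x ^ 2 = ((𝔼 x, f x ^ 2) ^ 2) ^ 2 := by ring
    _ ≤ ((𝔼 x, |f x|) * 𝔼 x, |f x| ^ 3) ^ 2 := by gcongr
    _ = (𝔼 x, |f x|) ^ 2 * (𝔼 x, |f x| ^ 3) ^ 2 := by ring
    _ ≤ (𝔼 x, |f x|) ^ 2 * ((𝔼 x, f x ^ 2) * 𝔼 x, f x ^ 4) := by gcongr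
    _ = _ := by ring

lemma expect_abs_le_of_expect_eq_zero [Nonempty Ω] {f : Ω → ℝ} (hf : 𝔼 x, f x = 0) (t : ℝ) :
    𝔼 x, |f x| ≤ 2 * max t 0 + 2 * 𝔼 x, {x | t < f x}.indicator (fun x => |f x|) x := by
  have pointwise (x : Ω) :
      |f x| + f x ≤ 2 * max t 0 + 2 * {x | t < f x}.indicator (fun x => |f x|) x := by
    by_cases hx : t < f x
    · rw [Set.indicator_of_mem (by exact hx)]
      linarith [le_max_right t 0, le_abs_self (f x)]
    · rw [Set.indicator_of_notMem (by exact hx)]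
      rcases abs_cases (f x) with ⟨habs, _⟩ | ⟨habs, _⟩ <;>
        linarith [le_max_left t 0, le_max_right t 0]
  have h := expect_le_expect fun x (_ : x ∈ univ) => pointwise x
  rwa [expect_add_distrib, expect_add_distrib, hf, add_zero, Fintype.expect_const,
    ← mul_expect] at h

lemma sq_mul_expect_indicator_le {δ : ℝ} (hδ : 0 ≤ δ) (f : Ω → ℝ) (t : ℝ) :
    δ ^ 2 * 𝔼 x, {x | t + δ ≤ f x}.indicator 1 x ≤ 𝔼 x, max (f x - t) 0 ^ 2 := by
  rw [mul_expect]
  refine expect_le_expect fun x _ => ?_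
  by_cases hx : t + δ ≤ f x
  · rw [Set.indicator_of_mem (by exact hx), Pi.one_apply, mul_one]
    gcongr
    exact le_max_of_le_left (by linarith)
  · rw [Set.indicator_of_notMem (by exact hx), mul_zero]
    positivity

end Expectation

section Walsh

lemma cubeSign_mul_self (b : Bool) : cubeSign b * cubeSign b = 1 := by cases b <;> simp [cubeSign]

lemma cubeSign_not (b : Bool) : cubeSign (!b) = -cubeSign b := by cases b <;> simp [cubeSign]

variable {ι : Type*}

/-- The Walsh function `x ↦ ∏ i ∈ S, x i`, a character of the cube `{-1, 1}^ι` (encoded as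
`ι → Bool` through `cubeSign`). -/
def walsh (S : Finset ι) (x : ι → Bool) : ℝ := ∏ i ∈ S, cubeSign (x i)

/-- The point of the cube obtained from `x` by reversing its `i`-th coordinate. -/
def flipCoord [DecidableEq ι] (i : ι) (x : ι → Bool) : ι → Bool := Function.update x i (!x i)

lemma walsh_mul_self (S : Finset ι) (x : ι → Bool) : walsh S x * walsh S x = 1 := by
  rw [walsh, ← prod_mul_distrib]
  exact prod_eq_one fun i _ => cubeSign_mul_self _

lemma sum_walsh_mul_walsh [Fintype ι] (x y : ι → Bool) :
    ∑ S, walsh S x * walsh S y = if x = y then 2 ^ Fintype.card ι else 0 := by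
  have hprod : ∑ S, walsh S x * walsh S y = ∏ i, (1 + cubeSign (x i) * cubeSign (y i)) := by
    simp only [prod_one_add, powerset_univ, walsh, prod_mul_distrib]
  rw [hprod]
  split_ifs with hxy
  · simp only [hxy, cubeSign_mul_self, prod_const, card_univ]
    norm_num
  · obtain ⟨i, hi⟩ := Function.ne_iff.1 hxy
    refine prod_eq_zero (mem_univ i) ?_
    rw [Bool.eq_not.2 hi, cubeSign_not, neg_mul, cubeSign_mul_self, add_neg_cancel]

variable [DecidableEq ι]

lemma walsh_insert {i : ι} {S : Finset ι} (hi : i ∉ S) (x : ι → Bool) :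
    walsh (insert i S) x = cubeSign (x i) * walsh S x :=
  prod_insert hi

lemma flipCoord_involutive (i : ι) : Function.Involutive (flipCoord i) := fun x => by
  simp [flipCoord]

lemma cubeSign_flipCoord_self (i : ι) (x : ι → Bool) :
    cubeSign (flipCoord i x i) = -cubeSign (x i) := by
  simp [flipCoord, cubeSign_not]

lemma walsh_flipCoord_of_notMem {i : ι} {S : Finset ι} (hi : i ∉ S) (x : ι → Bool) :
    walsh S (flipCoord i x) = walsh S x :=
  prod_congr rfl fun j hj => by simp [flipCoord, ne_of_mem_of_not_mem hj hi]

lemma walsh_flipCoord_of_mem {i : ι} {S : Finset ι} (hi : i ∈ S) (x : ι → Bool) :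
    walsh S (flipCoord i x) = -walsh S x := by
  rw [← insert_erase hi, walsh_insert (notMem_erase i S), walsh_insert (notMem_erase i S),
    walsh_flipCoord_of_notMem (notMem_erase i S), cubeSign_flipCoord_self, neg_mul]

variable [Fintype ι]

lemma expect_comp_flipCoord (i : ι) (f : (ι → Bool) → ℝ) :
    𝔼 x, f (flipCoord i x) = 𝔼 x, f x :=
  Fintype.expect_equiv (flipCoord_involutive i).toPerm _ _ fun _ => rfl

lemma expect_walsh_mul_walsh_of_ne {S T : Finset ι} (hST : S ≠ T) :
    𝔼 x, walsh S x * walsh T x = 0 := by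
  obtain ⟨i, hi⟩ : ∃ i, ¬(i ∈ S ↔ i ∈ T) := by
    simpa only [Finset.ext_iff, not_forall, ne_eq] using hST
  have odd (x : ι → Bool) :
      walsh S (flipCoord i x) * walsh T (flipCoord i x) = -(walsh S x * walsh T x) := by
    by_cases hS : i ∈ S
    · rw [walsh_flipCoord_of_mem hS, walsh_flipCoord_of_notMem (by tauto), neg_mul]
    · rw [walsh_flipCoord_of_notMem hS, walsh_flipCoord_of_mem (by tauto), mul_neg]
  have h := expect_comp_flipCoord i fun x => walsh S x * walsh T x
  simp only [odd, expect_neg_distrib] at h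
  linarith

lemma expect_walsh_mul_walsh (S T : Finset ι) :
    𝔼 x, walsh S x * walsh T x = if S = T then 1 else 0 := by
  split_ifs with hST
  · simp only [hST, walsh_mul_self, Fintype.expect_one]
  · exact expect_walsh_mul_walsh_of_ne hST

/-- The Fourier–Walsh coefficient of `f` at `S`, with respect to the uniform measure. -/
noncomputable def walshCoeff (f : (ι → Bool) → ℝ) (S : Finset ι) : ℝ := 𝔼 x, f x * walsh S x

/-- The function with Fourier–Walsh coefficients `a`. -/
def walshSum (a : Finset ι → ℝ) (x : ι → Bool) : ℝ := ∑ S, a S * walsh S x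

lemma expect_walshSum_mul (a : Finset ι → ℝ) (g : (ι → Bool) → ℝ) :
    𝔼 x, walshSum a x * g x = ∑ S, a S * walshCoeff g S := by
  simp only [walshSum, walshCoeff, sum_mul, expect_sum_comm, mul_assoc, ← mul_expect,
    mul_comm (g _)]

lemma walshCoeff_walshSum (a : Finset ι → ℝ) : walshCoeff (walshSum a) = a := by
  funext T
  rw [walshCoeff, expect_walshSum_mul]
  simp [walshCoeff, expect_walsh_mul_walsh]

lemma walshSum_walshCoeff (f : (ι → Bool) → ℝ) : walshSum (walshCoeff f) = f := by
  funext x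
  simp only [walshSum, walshCoeff, expect_mul, ← expect_sum_comm, mul_assoc, ← mul_sum,
    sum_walsh_mul_walsh]
  rw [Fintype.expect_eq_sum_div_card]
  simp

lemma expect_mul_eq_sum_walshCoeff (f g : (ι → Bool) → ℝ) :
    𝔼 x, f x * g x = ∑ S, walshCoeff f S * walshCoeff g S := by
  rw [← expect_walshSum_mul, walshSum_walshCoeff]

lemma expect_sq_eq_sum_walshCoeff_sq (f : (ι → Bool) → ℝ) :
    𝔼 x, f x ^ 2 = ∑ S, walshCoeff f S ^ 2 := by
  simp only [sq, expect_mul_eq_sum_walshCoeff]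

/-- The Laplacian of the cube, normalised so that `walsh S` has eigenvalue `#S`. -/
noncomputable def cubeLaplacian (f : (ι → Bool) → ℝ) (x : ι → Bool) : ℝ :=
  ∑ i, (f x - f (flipCoord i x)) / 2

lemma expect_sub_flipCoord_mul_walsh (f : (ι → Bool) → ℝ) (i : ι) (S : Finset ι) :
    𝔼 x, (f x - f (flipCoord i x)) / 2 * walsh S x = if i ∈ S then walshCoeff f S else 0 := by
  have hsub : 𝔼 x, (f x - f (flipCoord i x)) / 2 * walsh S x =
      (𝔼 x, f x * walsh S x - 𝔼 x, f x * walsh S (flipCoord i x)) / 2 := by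
    rw [← expect_comp_flipCoord i fun x => f x * walsh S (flipCoord i x), ← expect_sub_distrib,
      expect_div]
    exact expect_congr rfl fun x _ => by rw [flipCoord_involutive i x]; ring
  rw [hsub]
  split_ifs with hi
  · simp only [walsh_flipCoord_of_mem hi, mul_neg, expect_neg_distrib, walshCoeff]
    ring
  · simp only [walsh_flipCoord_of_notMem hi, sub_self, zero_div]

lemma walshCoeff_cubeLaplacian (f : (ι → Bool) → ℝ) (S : Finset ι) :
    walshCoeff (cubeLaplacian f) S = #S * walshCoeff f S := by
  rw [walshCoeff]
  simp only [cubeLaplacian, sum_mul, expect_sum_comm, expect_sub_flipCoord_mul_walsh]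
  simp

lemma expect_mul_cubeLaplacian (f : (ι → Bool) → ℝ) :
    𝔼 x, f x * cubeLaplacian f x = ∑ S, #S * walshCoeff f S ^ 2 := by
  rw [expect_mul_eq_sum_walshCoeff]
  exact sum_congr rfl fun S _ => by rw [walshCoeff_cubeLaplacian]; ring

lemma max_sub_mul_cubeLaplacian_le (f : (ι → Bool) → ℝ) (t : ℝ) (x : ι → Bool) :
    max (f x - t) 0 * cubeLaplacian (fun y => max (f y - t) 0) x ≤
      max (f x - t) 0 * cubeLaplacian f x := by
  rcases le_total (f x) t with hx | hx
  · simp [max_eq_right (sub_nonpos.2 hx)]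
  · refine mul_le_mul_of_nonneg_left (sum_le_sum fun i _ => ?_) (le_max_right _ _)
    dsimp only
    rw [max_eq_left (sub_nonneg.2 hx)]
    linarith [le_max_left (f (flipCoord i x) - t) 0]

end Walsh

section Hypercontractivity

lemma mul_pow_sub_pow_bounds (a b : ℝ) (k : ℕ) :
    0 ≤ a * b * ((a + b) ^ (2 * k) - (a - b) ^ (2 * k)) ∧
      a * b * ((a + b) ^ (2 * k) - (a - b) ^ (2 * k)) ≤
        2 * k * b ^ 2 * ((a + b) ^ (2 * k) + (a - b) ^ (2 * k)) := by
  induction k with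
  | zero => simp
  | succ k ih =>
    have hp : 0 ≤ (a + b) ^ (2 * k) := (even_two_mul k).pow_nonneg _
    have hq : 0 ≤ (a - b) ^ (2 * k) := (even_two_mul k).pow_nonneg _
    rw [mul_add_one, pow_add, pow_add]
    generalize (a + b) ^ (2 * k) = p at *
    generalize (a - b) ^ (2 * k) = q at *
    obtain ⟨hnonneg, hle⟩ := ih
    have hdiff : a * b * (p * (a + b) ^ 2 - q * (a - b) ^ 2) =
        (a ^ 2 + b ^ 2) * (a * b * (p - q)) + 2 * a ^ 2 * b ^ 2 * (p + q) := by ring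
    have hsum : p * (a + b) ^ 2 + q * (a - b) ^ 2 =
        (a ^ 2 + b ^ 2) * (p + q) + 2 * (a * b * (p - q)) := by ring
    rw [hdiff, hsum]
    refine ⟨by positivity, ?_⟩
    have hscaled := mul_le_mul_of_nonneg_left hle (by positivity : 0 ≤ a ^ 2 + b ^ 2)
    have hb4 : 0 ≤ b ^ 4 * (p + q) := by positivity
    have hcross : 0 ≤ (k + 1 : ℝ) * b ^ 2 * (a * b * (p - q)) :=
      mul_nonneg (by positivity) hnonneg
    push_cast
    linarith

lemma add_pow_add_sub_pow_le (a b : ℝ) {m : ℝ} {k : ℕ} (hm : 4 * (k : ℝ) ≤ m) :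
    ((a + b) ^ (2 * k) + (a - b) ^ (2 * k)) / 2 ≤ (a ^ 2 + m * b ^ 2) ^ k := by
  induction k with
  | zero => simp
  | succ k ih =>
    push_cast at hm
    have hm0 : 0 ≤ m := le_trans (by positivity) hm
    have hcross := (mul_pow_sub_pow_bounds a b k).2
    have ih := ih (by linarith)
    have hp : 0 ≤ (a + b) ^ (2 * k) := (even_two_mul k).pow_nonneg _
    have hq : 0 ≤ (a - b) ^ (2 * k) := (even_two_mul k).pow_nonneg _
    rw [mul_add_one, pow_add, pow_add, pow_succ (a ^ 2 + m * b ^ 2)]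
    generalize (a + b) ^ (2 * k) = p at *
    generalize (a - b) ^ (2 * k) = q at *
    calc (p * (a + b) ^ 2 + q * (a - b) ^ 2) / 2
        = (p + q) / 2 * (a ^ 2 + b ^ 2) + a * b * (p - q) := by ring
      _ ≤ (p + q) / 2 * (a ^ 2 + b ^ 2) + 2 * k * b ^ 2 * (p + q) := by gcongr
      _ = (p + q) / 2 * (a ^ 2 + (4 * k + 1) * b ^ 2) := by ring
      _ ≤ (p + q) / 2 * (a ^ 2 + m * b ^ 2) := by gcongr; linarith
      _ ≤ (a ^ 2 + m * b ^ 2) ^ k * (a ^ 2 + m * b ^ 2) := by gcongr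

variable {ι : Type*} [Fintype ι] [DecidableEq ι]

lemma expect_add_cubeSign_mul_pow_le {i : ι} {f g : (ι → Bool) → ℝ}
    (hf : ∀ x, f (flipCoord i x) = f x) (hg : ∀ x, g (flipCoord i x) = g x) (k : ℕ) :
    𝔼 x, (f x + cubeSign (x i) * g x) ^ (2 * k) ≤ 𝔼 x, (f x ^ 2 + 4 * k * g x ^ 2) ^ k := by
  have hflip : 𝔼 x, (f x - cubeSign (x i) * g x) ^ (2 * k) =
      𝔼 x, (f x + cubeSign (x i) * g x) ^ (2 * k) := by
    rw [← expect_comp_flipCoord i]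
    simp only [hf, hg, cubeSign_flipCoord_self, neg_mul, sub_neg_eq_add]
  have two_point (x : ι → Bool) :
      ((f x + cubeSign (x i) * g x) ^ (2 * k) + (f x - cubeSign (x i) * g x) ^ (2 * k)) / 2 ≤
        (f x ^ 2 + 4 * k * g x ^ 2) ^ k := by
    simpa only [mul_pow, sq (cubeSign _), cubeSign_mul_self, one_mul] using
      add_pow_add_sub_pow_le (f x) (cubeSign (x i) * g x) (le_refl (4 * (k : ℝ)))
  have h := expect_le_expect fun x (_ : x ∈ univ) => two_point x
  rwa [← expect_div, expect_add_distrib, hflip, add_self_div_two] at h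

/- Split off one coordinate at a time: the two-point inequality removes it, and Minkowski's
inequality separates the two resulting squares. -/
lemma expect_sum_powerset_walsh_pow_le {k : ℕ} (hk : k ≠ 0) (T : Finset ι) (a : Finset ι → ℝ) :
    𝔼 x, (∑ S ∈ T.powerset, a S * walsh S x) ^ (2 * k) ≤
      (∑ S ∈ T.powerset, (4 * k : ℝ) ^ #S * a S ^ 2) ^ k := by
  induction T using Finset.induction_on generalizing a with
  | empty => simp [walsh, pow_mul]
  | insert i T hi ih =>
    have hmem {S : Finset ι} (hS : S ∈ T.powerset) : i ∉ S := fun h => hi (mem_powerset.1 hS h)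
    have flip_invariant (b : Finset ι → ℝ) (x : ι → Bool) :
        ∑ S ∈ T.powerset, b S * walsh S (flipCoord i x) = ∑ S ∈ T.powerset, b S * walsh S x :=
      sum_congr rfl fun S hS => by rw [walsh_flipCoord_of_notMem (hmem hS)]
    have split_walsh (x : ι → Bool) : ∑ S ∈ (insert i T).powerset, a S * walsh S x =
        ∑ S ∈ T.powerset, a S * walsh S x +
          cubeSign (x i) * ∑ S ∈ T.powerset, a (insert i S) * walsh S x := by
      rw [sum_powerset_insert hi, mul_sum]
      congr 1
      exact sum_congr rfl fun S hS => by rw [walsh_insert (hmem hS)]; ring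
    have split_weights : ∑ S ∈ (insert i T).powerset, (4 * k : ℝ) ^ #S * a S ^ 2 =
        ∑ S ∈ T.powerset, (4 * k : ℝ) ^ #S * a S ^ 2 +
          4 * k * ∑ S ∈ T.powerset, (4 * k : ℝ) ^ #S * a (insert i S) ^ 2 := by
      rw [sum_powerset_insert hi, mul_sum]
      congr 1
      exact sum_congr rfl fun S hS => by rw [card_insert_of_notMem (hmem hS)]; ring
    simp only [split_walsh]
    rw [split_weights]
    refine (expect_add_cubeSign_mul_pow_le (flip_invariant a)
      (flip_invariant fun S => a (insert i S)) k).trans ?_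
    refine expect_add_pow_le hk (fun x => by positivity) (fun x => by positivity)
      (by positivity) (by positivity) ?_ ?_
    · simpa only [← pow_mul] using ih a
    · simp only [mul_pow _ _ k, ← mul_expect]
      gcongr
      simpa only [← pow_mul] using ih fun S => a (insert i S)

lemma expect_pow_le_sum_walshCoeff {k : ℕ} (hk : k ≠ 0) (f : (ι → Bool) → ℝ) :
    𝔼 x, f x ^ (2 * k) ≤ (∑ S, (4 * k : ℝ) ^ #S * walshCoeff f S ^ 2) ^ k := by
  have h := expect_sum_powerset_walsh_pow_le hk univ (walshCoeff f)
  rw [powerset_univ] at h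
  have inversion (x : ι → Bool) : ∑ S, walshCoeff f S * walsh S x = f x :=
    congrFun (walshSum_walshCoeff f) x
  simpa only [inversion] using h

end Hypercontractivity

section WalshDegree

variable {ι : Type*} [Fintype ι] [DecidableEq ι] {d : ℕ} {f : (ι → Bool) → ℝ}

/-- `f` is a polynomial of degree at most `d`, expressed through its Fourier–Walsh coefficients. -/
def WalshDegreeLE (d : ℕ) (f : (ι → Bool) → ℝ) : Prop := ∀ S, d < #S → walshCoeff f S = 0

namespace WalshDegreeLE

lemma cubeLaplacian (hf : WalshDegreeLE d f) : WalshDegreeLE d (cubeLaplacian f) := fun S hS => by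
  rw [walshCoeff_cubeLaplacian, hf S hS, mul_zero]

lemma sum_mul_walshCoeff_sq_le (hf : WalshDegreeLE d f) {w : ℕ → ℝ} (hw : Monotone w) :
    ∑ S, w #S * walshCoeff f S ^ 2 ≤ w d * 𝔼 x, f x ^ 2 := by
  rw [expect_sq_eq_sum_walshCoeff_sq, mul_sum]
  refine sum_le_sum fun S _ => ?_
  rcases lt_or_ge d #S with hS | hS
  · simp [hf S hS]
  · gcongr
    exact hw hS

lemma expect_cubeLaplacian_sq_le (hf : WalshDegreeLE d f) :
    𝔼 x, (_root_.cubeLaplacian f x) ^ 2 ≤ d ^ 2 * 𝔼 x, f x ^ 2 := by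
  rw [expect_sq_eq_sum_walshCoeff_sq]
  simp only [walshCoeff_cubeLaplacian, mul_pow]
  exact hf.sum_mul_walshCoeff_sq_le (w := fun m => (m : ℝ) ^ 2) fun m n hmn => by
    dsimp only
    gcongr

lemma expect_pow_le (hf : WalshDegreeLE d f) {k : ℕ} (hk : k ≠ 0) :
    𝔼 x, f x ^ (2 * k) ≤ ((4 * k : ℝ) ^ d * 𝔼 x, f x ^ 2) ^ k := by
  have hk1 : (1 : ℝ) ≤ k := by exact_mod_cast Nat.one_le_iff_ne_zero.2 hk
  refine (expect_pow_le_sum_walshCoeff hk f).trans ?_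
  gcongr
  exact hf.sum_mul_walshCoeff_sq_le (pow_right_mono₀ (by linarith))

lemma sqrt_expect_sq_le_expect_abs (hf : WalshDegreeLE d f) :
    √(𝔼 x, f x ^ 2) ≤ 8 ^ d * 𝔼 x, |f x| := by
  have hV : 0 ≤ 𝔼 x, f x ^ 2 := expect_nonneg fun x _ => sq_nonneg _
  rcases hV.eq_or_lt with h0 | hpos
  · rw [← h0, Real.sqrt_zero]
    positivity
  have hfourth : 𝔼 x, f x ^ 4 ≤ (8 ^ d * 𝔼 x, f x ^ 2) ^ 2 := by
    have h := hf.expect_pow_le two_ne_zero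
    norm_num at h
    exact h
  refine Real.sqrt_le_iff.2 ⟨by positivity, le_of_mul_le_mul_right ?_ (pow_pos hpos 2)⟩
  calc (𝔼 x, f x ^ 2) * (𝔼 x, f x ^ 2) ^ 2 = (𝔼 x, f x ^ 2) ^ 3 := by ring
    _ ≤ (𝔼 x, |f x|) ^ 2 * 𝔼 x, f x ^ 4 := expect_sq_pow_three_le f
    _ ≤ (𝔼 x, |f x|) ^ 2 * (8 ^ d * 𝔼 x, f x ^ 2) ^ 2 := by gcongr
    _ = _ := by ring

/- Hölder's inequality with the exponent `k ≈ r / d`, which balances the moment growth `(4k)^d`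
against the loss `exp (r / k)`. -/
lemma expect_indicator_sq_le (hf : WalshDegreeLE d f) (hd : d ≠ 0) {r : ℝ} (hr : 0 ≤ r)
    {A : Set (ι → Bool)} (hA : 𝔼 x, A.indicator 1 x ≤ Real.exp (-r)) :
    𝔼 x, A.indicator (fun x => f x ^ 2) x ≤
      (4 * (r / d + 1)) ^ d * Real.exp (d - r) * 𝔼 x, f x ^ 2 := by
  have hd0 : (0 : ℝ) < d := by positivity
  set k : ℕ := ⌊r / d⌋₊ + 1 with hk
  have hkne : k ≠ 0 := Nat.succ_ne_zero _
  have hk0 : (0 : ℝ) < k := by positivity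
  have hk1 : (1 : ℝ) ≤ k := by simp [hk]
  have hk_le : (k : ℝ) ≤ r / d + 1 := by
    rw [hk, Nat.cast_add_one]
    gcongr
    exact Nat.floor_le (by positivity)
  have hr_le : r * (k : ℝ)⁻¹ ≤ d := by
    rw [← div_eq_mul_inv, div_le_iff₀ hk0, mul_comm, ← div_le_iff₀ hd0, hk, Nat.cast_add_one]
    exact (Nat.lt_floor_add_one _).le
  have hexp : (𝔼 x, A.indicator 1 x) ^ (1 - (k : ℝ)⁻¹) ≤ Real.exp (d - r) := by
    calc (𝔼 x, A.indicator 1 x) ^ (1 - (k : ℝ)⁻¹)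
        ≤ Real.exp (-r) ^ (1 - (k : ℝ)⁻¹) :=
          Real.rpow_le_rpow (expect_nonneg fun x _ => Set.indicator_nonneg (by simp) x) hA
            (sub_nonneg.2 (inv_le_one_of_one_le₀ hk1))
      _ = Real.exp (r * (k : ℝ)⁻¹ - r) := by rw [← Real.exp_mul]; congr 1; ring
      _ ≤ Real.exp (d - r) := by gcongr
  have hmoment : 𝔼 x, (f x ^ 2) ^ k ≤ ((4 * k) ^ d * 𝔼 x, f x ^ 2) ^ k := by
    simpa only [← pow_mul] using hf.expect_pow_le hkne
  calc 𝔼 x, A.indicator (fun x => f x ^ 2) x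
      ≤ (𝔼 x, A.indicator 1 x) ^ (1 - (k : ℝ)⁻¹) * ((4 * k) ^ d * 𝔼 x, f x ^ 2) :=
        expect_indicator_le_rpow_mul hkne (fun x => sq_nonneg _) (by positivity) hmoment A
    _ ≤ Real.exp (d - r) * ((4 * (r / d + 1)) ^ d * 𝔼 x, f x ^ 2) := by gcongr
    _ = _ := by ring

end WalshDegreeLE

end WalshDegree

section FaberKrahn

variable {ι : Type*} [Fintype ι] [DecidableEq ι] {f : (ι → Bool) → ℝ} {A : Set (ι → Bool)}

lemma expect_walshSum_inv_eight_pow_four_le (a : Finset ι → ℝ) :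
    𝔼 x, walshSum (fun S => (1 / 8) ^ #S * a S) x ^ 4 ≤ (∑ S, (1 / 8) ^ #S * a S ^ 2) ^ 2 := by
  have h := expect_pow_le_sum_walshCoeff two_ne_zero (walshSum fun S => (1 / 8) ^ #S * a S)
  have hweight (S : Finset ι) :
      (4 * (2 : ℕ) : ℝ) ^ #S * ((1 / 8) ^ #S * a S) ^ 2 = (1 / 8) ^ #S * a S ^ 2 := by
    have hcancel : (4 * (2 : ℕ) : ℝ) ^ #S * (1 / 8) ^ #S = 1 := by
      rw [← mul_pow]
      norm_num
    linear_combination (1 / 8) ^ #S * a S ^ 2 * hcancel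
  simpa only [walshCoeff_walshSum, hweight] using h

lemma sum_inv_eight_pow_mul_walshCoeff_sq_le (hf : Function.support f ⊆ A) :
    ∑ S, (1 / 8) ^ #S * walshCoeff f S ^ 2 ≤ √(𝔼 x, A.indicator 1 x) * 𝔼 x, f x ^ 2 := by
  set g := walshSum fun S => (1 / 8) ^ #S * walshCoeff f S with hg
  set N := ∑ S, (1 / 8) ^ #S * walshCoeff f S ^ 2 with hN
  have hN0 : 0 ≤ N := sum_nonneg fun S _ => by positivity
  have hpair : 𝔼 x, f x * A.indicator g x = N := by
    have hcomm (x : ι → Bool) : f x * A.indicator g x = g x * f x := by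
      by_cases hx : x ∈ A
      · rw [Set.indicator_of_mem hx, mul_comm]
      · rw [Function.notMem_support.1 fun h => hx (hf h), zero_mul, mul_zero]
    simp only [hcomm]
    rw [hg, expect_walshSum_mul, hN]
    simp only [sq, mul_assoc]
  have htail : 𝔼 x, A.indicator g x ^ 2 ≤ √(𝔼 x, A.indicator 1 x) * N := by
    have hsq (x : ι → Bool) : A.indicator g x ^ 2 = A.indicator (fun y => g y ^ 2) x := by
      by_cases hx : x ∈ A <;> simp [hx]
    simp only [hsq]
    refine (expect_indicator_le_sqrt_mul_sqrt A _).trans ?_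
    gcongr
    refine Real.sqrt_le_iff.2 ⟨hN0, ?_⟩
    simpa only [← pow_mul] using expect_walshSum_inv_eight_pow_four_le (walshCoeff f)
  rcases hN0.eq_or_lt with h0 | hpos
  · rw [← h0]
    positivity
  refine le_of_mul_le_mul_right ?_ hpos
  calc N * N = (𝔼 x, f x * A.indicator g x) ^ 2 := by rw [hpair, sq]
    _ ≤ (𝔼 x, f x ^ 2) * 𝔼 x, A.indicator g x ^ 2 := expect_mul_sq_le_sq_mul_sq _ _ _
    _ ≤ (𝔼 x, f x ^ 2) * (√(𝔼 x, A.indicator 1 x) * N) := by gcongr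
    _ = _ := by ring

lemma exp_neg_mul_le_inv_eight_pow (s : ℝ) (m : ℕ) :
    Real.exp (-s) * (1 + s - 3 * m) ≤ (1 / 8) ^ m := by
  have hexp3 : (8 : ℝ) ≤ Real.exp 3 := by
    rw [show (3 : ℝ) = (3 : ℕ) * 1 by norm_num, Real.exp_nat_mul]
    calc (8 : ℝ) = 2 ^ 3 := by norm_num
      _ ≤ Real.exp 1 ^ 3 := by gcongr; linarith [Real.exp_one_gt_d9]
  calc Real.exp (-s) * (1 + s - 3 * m) ≤ Real.exp (-s) * Real.exp (s - 3 * m) := by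
        gcongr
        linarith [Real.add_one_le_exp (s - 3 * m)]
    _ = (1 / Real.exp 3) ^ m := by
        rw [← Real.exp_add, one_div, ← Real.exp_neg, ← Real.exp_nat_mul]
        congr 1
        ring
    _ ≤ (1 / 8) ^ m := by gcongr

/- The weights `(1 / 8) ^ m` dominate a tangent line in `m`, which turns the smoothing estimate
into a bound on the Dirichlet form. -/
lemma mul_expect_sq_le_expect_mul_cubeLaplacian (hf : Function.support f ⊆ A) {r : ℝ}
    (hA : 𝔼 x, A.indicator 1 x ≤ Real.exp (-r)) :
    r * 𝔼 x, f x ^ 2 ≤ 6 * 𝔼 x, f x * cubeLaplacian f x := by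
  have hsqrt : √(𝔼 x, A.indicator 1 x) ≤ Real.exp (-(r / 2)) := by
    rw [← neg_div, Real.exp_half]
    gcongr
  have tangent : Real.exp (-(r / 2)) * ((1 + r / 2) * 𝔼 x, f x ^ 2 -
      3 * 𝔼 x, f x * cubeLaplacian f x) ≤ ∑ S, (1 / 8) ^ #S * walshCoeff f S ^ 2 := by
    rw [expect_sq_eq_sum_walshCoeff_sq, expect_mul_cubeLaplacian, mul_sum, mul_sum,
      ← sum_sub_distrib, mul_sum]
    refine sum_le_sum fun S _ => ?_
    calc _ = Real.exp (-(r / 2)) * (1 + r / 2 - 3 * #S) * walshCoeff f S ^ 2 := by ring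
      _ ≤ _ := by gcongr; exact exp_neg_mul_le_inv_eight_pow _ _
  have h : Real.exp (-(r / 2)) * ((1 + r / 2) * 𝔼 x, f x ^ 2 -
      3 * 𝔼 x, f x * cubeLaplacian f x) ≤ Real.exp (-(r / 2)) * 𝔼 x, f x ^ 2 :=
    tangent.trans <| (sum_inv_eight_pow_mul_walshCoeff_sq_le hf).trans <|
      mul_le_mul_of_nonneg_right hsqrt (expect_nonneg fun x _ => sq_nonneg _)
  linarith [le_of_mul_le_mul_left h (Real.exp_pos _)]

lemma sq_mul_expect_max_sub_sq_le {r : ℝ} (hr : 0 ≤ r) {t : ℝ}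
    (htail : 𝔼 x, {x | t < f x}.indicator 1 x ≤ Real.exp (-r)) :
    r ^ 2 * 𝔼 x, max (f x - t) 0 ^ 2 ≤
      36 * 𝔼 x, {x | t < f x}.indicator (fun x => cubeLaplacian f x ^ 2) x := by
  set A := {x | t < f x}
  set u : (ι → Bool) → ℝ := fun x => max (f x - t) 0
  set W := 𝔼 x, A.indicator (fun x => cubeLaplacian f x ^ 2) x
  have hsupp : Function.support u ⊆ A := fun x hx => by
    by_contra hxA
    exact hx (max_eq_right (sub_nonpos.2 (not_lt.1 hxA)))
  have hfk : r * 𝔼 x, u x ^ 2 ≤ 6 * 𝔼 x, u x * cubeLaplacian f x :=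
    (mul_expect_sq_le_expect_mul_cubeLaplacian hsupp htail).trans <|
      mul_le_mul_of_nonneg_left
        (expect_le_expect fun x _ => max_sub_mul_cubeLaplacian_le f t x) (by norm_num)
  have hcs : (𝔼 x, u x * cubeLaplacian f x) ^ 2 ≤ (𝔼 x, u x ^ 2) * W := by
    refine expect_sq_le_expect_mul_expect_of_sq_le_mul (fun x => sq_nonneg _) ?_ ?_
    · exact fun x => Set.indicator_nonneg (fun y _ => sq_nonneg _) x
    · intro x
      by_cases hx : x ∈ A
      · rw [Set.indicator_of_mem hx, mul_pow]
      · rw [Function.notMem_support.1 fun h => hx (hsupp h)]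
        simp
  have hV : 0 ≤ 𝔼 x, u x ^ 2 := expect_nonneg fun x _ => sq_nonneg _
  have hW : 0 ≤ W := expect_nonneg fun x _ => Set.indicator_nonneg (fun y _ => sq_nonneg _) x
  rcases hV.eq_or_lt with h0 | hpos
  · rw [← h0]
    linarith
  refine le_of_mul_le_mul_left ?_ hpos
  calc (𝔼 x, u x ^ 2) * (r ^ 2 * 𝔼 x, u x ^ 2) = (r * 𝔼 x, u x ^ 2) ^ 2 := by ring
    _ ≤ (6 * 𝔼 x, u x * cubeLaplacian f x) ^ 2 := by gcongr
    _ = 36 * (𝔼 x, u x * cubeLaplacian f x) ^ 2 := by ring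
    _ ≤ 36 * ((𝔼 x, u x ^ 2) * W) := by gcongr
    _ = _ := by ring

end FaberKrahn

section LocalTail

variable {ι : Type*} [Fintype ι] [DecidableEq ι] {d : ℕ} {f : (ι → Bool) → ℝ} {r t : ℝ}

lemma exp_neg_half_mul_le_one (hd : d ≠ 0) (hr : 10 * d ≤ r) :
    Real.exp (-(r / 2)) * (4 * 8 ^ d) ≤ 1 := by
  have hle : (4 * 8 ^ d : ℝ) ≤ Real.exp (r / 2) := by
    calc (4 * 8 ^ d : ℝ) ≤ 4 ^ d * 8 ^ d := by gcongr; exact le_self_pow₀ (by norm_num) hd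
      _ = (2 ^ 5) ^ d := by rw [← mul_pow]; norm_num
      _ ≤ (Real.exp 1 ^ 5) ^ d := by gcongr; linarith [Real.exp_one_gt_d9]
      _ = Real.exp (5 * d) := by
          rw [← Real.exp_nat_mul, ← Real.exp_nat_mul]
          congr 1
          push_cast
          ring
      _ ≤ Real.exp (r / 2) := by gcongr; linarith
  rwa [Real.exp_neg, ← div_eq_inv_mul, div_le_one (Real.exp_pos _)]

lemma mul_pow_mul_exp_le_sq (hd : d ≠ 0) :
    2304 * 256 ^ d * Real.exp (d + 1) ≤ (2304 ^ d) ^ 2 := by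
  have hd1 : (1 : ℝ) ≤ d := by exact_mod_cast Nat.one_le_iff_ne_zero.2 hd
  have hexp : Real.exp (d + 1) ≤ 9 ^ d := by
    calc Real.exp (d + 1) ≤ Real.exp (d * 2) := by gcongr; linarith
      _ = (Real.exp 1 ^ 2) ^ d := by rw [Real.exp_nat_mul, ← Real.exp_nat_mul 1 2]; norm_num
      _ ≤ (3 ^ 2) ^ d := by gcongr; exact Real.exp_one_lt_three.le
      _ = 9 ^ d := by norm_num
  calc 2304 * 256 ^ d * Real.exp (d + 1) ≤ (2304 : ℝ) ^ d * 256 ^ d * 9 ^ d := by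
        gcongr
        exact le_self_pow₀ (by norm_num) hd
    _ = (2304 ^ d) ^ 2 := by rw [← mul_pow, ← mul_pow, ← pow_mul, mul_comm d, pow_mul]; norm_num

lemma le_mul_rpow_of_sq_le {q c δ : ℝ} (hq : 0 < q) (hc : 0 ≤ c)
    (h : (q * δ) ^ 2 ≤ c ^ 2 * q ^ d) : δ ≤ c * q ^ ((d : ℝ) / 2 - 1) := by
  have hsq : (c * q ^ ((d : ℝ) / 2)) ^ 2 = c ^ 2 * q ^ d := by
    rw [mul_pow, ← Real.rpow_mul_natCast hq.le, Nat.cast_ofNat, div_mul_cancel₀ _ two_ne_zero,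
      Real.rpow_natCast]
  have hmul : q * δ ≤ c * q ^ ((d : ℝ) / 2) :=
    (le_abs_self _).trans (abs_le_of_sq_le_sq (h.trans_eq hsq.symm) (by positivity))
  rwa [Real.rpow_sub_one hq.ne', mul_div_assoc', le_div_iff₀' hq]

namespace WalshDegreeLE

lemma sqrt_expect_sq_le_mul_max (hf : WalshDegreeLE d f) (hd : d ≠ 0) (hmean : 𝔼 x, f x = 0)
    (hr : 10 * d ≤ r) (htail : 𝔼 x, {x | t < f x}.indicator 1 x ≤ Real.exp (-r)) :
    √(𝔼 x, f x ^ 2) ≤ 4 * 8 ^ d * max t 0 := by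
  set s := √(𝔼 x, f x ^ 2)
  have hlarge : 𝔼 x, {x | t < f x}.indicator (fun x => |f x|) x ≤ Real.exp (-(r / 2)) * s := by
    refine (expect_indicator_le_sqrt_mul_sqrt _ _).trans ?_
    simp only [sq_abs]
    rw [← neg_div, Real.exp_half]
    gcongr
  have habs : 𝔼 x, |f x| ≤ 2 * max t 0 + 2 * (Real.exp (-(r / 2)) * s) := by
    linarith [expect_abs_le_of_expect_eq_zero hmean t]
  have hs : s ≤ 8 ^ d * (2 * max t 0 + 2 * (Real.exp (-(r / 2)) * s)) :=
    hf.sqrt_expect_sq_le_expect_abs.trans (by gcongr)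
  have hsmall := mul_le_mul_of_nonneg_right (exp_neg_half_mul_le_one hd hr)
    (Real.sqrt_nonneg (𝔼 x, f x ^ 2))
  linarith

lemma nonneg_of_tail_le (hf : WalshDegreeLE d f) (hd : d ≠ 0) (hmean : 𝔼 x, f x = 0)
    (hr : 10 * d ≤ r) (htail : 𝔼 x, {x | t < f x}.indicator 1 x ≤ Real.exp (-r)) : 0 ≤ t := by
  by_contra! ht
  have hsqrt := hf.sqrt_expect_sq_le_mul_max hd hmean hr htail
  rw [max_eq_right ht.le, mul_zero, Real.sqrt_le_iff, zero_pow two_ne_zero] at hsqrt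
  have hsq : 𝔼 x, f x ^ 2 = 0 := hsqrt.2.antisymm (expect_nonneg fun x _ => sq_nonneg _)
  have hzero (x : ι → Bool) : f x = 0 :=
    sq_eq_zero_iff.1 ((expect_eq_zero_iff_of_nonneg fun x _ => sq_nonneg (f x)).1 hsq x
      (mem_univ x))
  have hr0 : r ≤ 0 := by simpa [hzero, ht, Set.indicator_univ] using htail
  have hd0 : (0 : ℝ) < d := by positivity
  linarith

lemma sq_mul_le_of_tail (hf : WalshDegreeLE d f) (hd : d ≠ 0) (hr : 0 ≤ r) {δ : ℝ} (hδ : 0 ≤ δ)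
    (htail : 𝔼 x, {x | t < f x}.indicator 1 x ≤ Real.exp (-r))
    (hlower : Real.exp (-(r + 1)) ≤ 𝔼 x, {x | t + δ ≤ f x}.indicator 1 x) :
    (r * δ) ^ 2 ≤ 36 * d ^ 2 * (4 * (r / d + 1)) ^ d * Real.exp (d + 1) * 𝔼 x, f x ^ 2 := by
  have hexp : Real.exp (d - r) = Real.exp (d + 1) * Real.exp (-(r + 1)) := by
    rw [← Real.exp_add]
    congr 1
    ring
  refine le_of_mul_le_mul_right ?_ (Real.exp_pos (-(r + 1)))
  calc (r * δ) ^ 2 * Real.exp (-(r + 1))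
      ≤ (r * δ) ^ 2 * 𝔼 x, {x | t + δ ≤ f x}.indicator 1 x := by gcongr
    _ = r ^ 2 * (δ ^ 2 * 𝔼 x, {x | t + δ ≤ f x}.indicator 1 x) := by ring
    _ ≤ r ^ 2 * 𝔼 x, max (f x - t) 0 ^ 2 := by
        gcongr
        exact sq_mul_expect_indicator_le hδ f t
    _ ≤ 36 * 𝔼 x, {x | t < f x}.indicator (fun x => _root_.cubeLaplacian f x ^ 2) x :=
        sq_mul_expect_max_sub_sq_le hr htail
    _ ≤ 36 * ((4 * (r / d + 1)) ^ d * Real.exp (d - r) * (d ^ 2 * 𝔼 x, f x ^ 2)) := by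
        gcongr
        refine (hf.cubeLaplacian.expect_indicator_sq_le hd hr htail).trans ?_
        gcongr
        exact hf.expect_cubeLaplacian_sq_le
    _ = _ := by rw [hexp]; ring

lemma le_mul_rpow_of_tail (hf : WalshDegreeLE d f) (hd : d ≠ 0) (hmean : 𝔼 x, f x = 0)
    (hr : 10 * d ≤ r) {δ : ℝ} (hδ : 0 ≤ δ)
    (htail : 𝔼 x, {x | t < f x}.indicator 1 x ≤ Real.exp (-r))
    (hlower : Real.exp (-(r + 1)) ≤ 𝔼 x, {x | t + δ ≤ f x}.indicator 1 x) :
    δ ≤ t * (2304 ^ d * (r / d + 1) ^ ((d : ℝ) / 2 - 1)) := by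
  have hd0 : (0 : ℝ) < d := by positivity
  have hr0 : 0 ≤ r := by linarith
  have ht := hf.nonneg_of_tail_le hd hmean hr htail
  set q := r / d + 1 with hq
  have hqr : q * d ≤ 2 * r := by
    rw [hq, add_one_mul, div_mul_cancel₀ _ hd0.ne']
    linarith
  have hV : 𝔼 x, f x ^ 2 ≤ (4 * 8 ^ d * t) ^ 2 := by
    have h := hf.sqrt_expect_sq_le_mul_max hd hmean hr htail
    rw [max_eq_left ht] at h
    exact (Real.sqrt_le_iff.1 h).2
  have h256 : (256 : ℝ) ^ d = 4 ^ d * 8 ^ d * 8 ^ d := by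
    rw [← mul_pow, ← mul_pow]
    norm_num
  have hsq : (q * δ) ^ 2 ≤ (t * 2304 ^ d) ^ 2 * q ^ d := by
    refine le_of_mul_le_mul_left ?_ (pow_pos hd0 2)
    calc (d : ℝ) ^ 2 * (q * δ) ^ 2 = (q * d * δ) ^ 2 := by ring
      _ ≤ (2 * r * δ) ^ 2 := by gcongr
      _ = 4 * (r * δ) ^ 2 := by ring
      _ ≤ 4 * (36 * d ^ 2 * (4 * q) ^ d * Real.exp (d + 1) * (4 * 8 ^ d * t) ^ 2) := by
          gcongr
          exact (hf.sq_mul_le_of_tail hd hr0 hδ htail hlower).trans (by gcongr)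
      _ = d ^ 2 * (t ^ 2 * (2304 * 256 ^ d * Real.exp (d + 1)) * q ^ d) := by
          rw [h256, mul_pow]
          ring
      _ ≤ d ^ 2 * (t ^ 2 * (2304 ^ d) ^ 2 * q ^ d) := by
          gcongr
          exact mul_pow_mul_exp_le_sq hd
      _ = _ := by ring
  rw [← mul_assoc]
  exact le_mul_rpow_of_sq_le (by positivity) (by positivity) hsq

end WalshDegreeLE

end LocalTail

section DiscreteCube

variable {n d : ℕ} {P : (Fin n → Bool) → ℝ} {r a : ℝ}

lemma cubeE_eq_expect (f : (Fin n → Bool) → ℝ) : cubeE n f = 𝔼 x, f x := by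
  simp [cubeE, Fintype.expect_eq_sum_div_card]

lemma cubePr_eq_expect_indicator (A : Set (Fin n → Bool)) :
    cubePr n A = 𝔼 x, A.indicator 1 x := by
  simp [cubePr, Fintype.expect_eq_sum_div_card, Set.indicator_apply]

lemma IsPolyDeg.walshDegreeLE (hP : IsPolyDeg n d P) : WalshDegreeLE d P := by
  obtain ⟨a, ha, hPa⟩ := hP
  obtain rfl : P = walshSum a := funext hPa
  simpa only [WalshDegreeLE, walshCoeff_walshSum] using ha

lemma IsQuantile.exp_neg_le_expect_indicator (h : IsQuantile n P r a) :
    Real.exp (-r) ≤ 𝔼 x, {x | a ≤ P x}.indicator 1 x :=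
  h.1.trans_eq (cubePr_eq_expect_indicator _)

lemma IsQuantile.expect_indicator_le_exp_neg (h : IsQuantile n P r a) :
    𝔼 x, {x | a < P x}.indicator 1 x ≤ Real.exp (-r) := by
  have hcompl : {x | P x ≤ a} = {x | a < P x}ᶜ := by
    ext x
    simp
  have h' := h.2
  rw [cubePr_eq_expect_indicator, hcompl, Set.indicator_compl] at h'
  simp only [Pi.sub_apply, Pi.one_apply, expect_sub_distrib, Fintype.expect_one] at h'
  linarith

end DiscreteCube

/-- Multiplicative local tail bound:
for `r ≥ C d`, `a_{r+1} ≤ a_r [1 + C^d (r/d + 1)^{d/2 - 1}]` when `E P(X) = 0`. -/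
theorem multiplicative_local_tail_bound :
    ∃ C : ℝ, 0 < C ∧
      ∀ (n d : ℕ), 1 ≤ n → 1 ≤ d →
        ∀ P : (Fin n → Bool) → ℝ, IsPolyDeg n d P →
          cubeE n P = 0 →
            ∀ r : ℝ, C * (d : ℝ) ≤ r →
              ∀ ar ar1 : ℝ, IsQuantile n P r ar → IsQuantile n P (r + 1) ar1 →
                ar1 ≤ ar * (1 + C ^ d * (r / (d : ℝ) + 1) ^ ((d : ℝ) / 2 - 1)) := by
  refine ⟨2304, by norm_num, fun n d _ hd P hP hmean r hr ar ar1 har har1 => ?_⟩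
  have hd0 : d ≠ 0 := Nat.one_le_iff_ne_zero.1 hd
  have hr10 : 10 * (d : ℝ) ≤ r := le_trans (by gcongr; norm_num) hr
  have htail := har.expect_indicator_le_exp_neg
  rw [cubeE_eq_expect] at hmean
  rw [mul_add, mul_one, ← sub_le_iff_le_add']
  rcases le_total ar1 ar with hle | hle
  · have har0 := hP.walshDegreeLE.nonneg_of_tail_le hd0 hmean hr10 htail
    have hr0 : 0 ≤ r := le_trans (by positivity) hr
    exact (sub_nonpos.2 hle).trans (by positivity)
  · refine hP.walshDegreeLE.le_mul_rpow_of_tail hd0 hmean hr10 (sub_nonneg.2 hle) htail ?_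
    rw [add_sub_cancel]
    exact har1.exp_neg_le_expect_indicator
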